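/- arXiv:2505.14865 — 3 statements merged into one kernel-verified Lean document; each statement's English description precedes it below -/
import Mathlib

section
/- Let n = 2^(2^ν) + 1 be prime with ν ≥ 1 and let ζ = exp(2πi/n). Then Σ ζ^a over all nonzero quadratic residues a modulo n equals (−1 + √n)/2, and Σ ζ^b over all quadratic non-residues b modulo n equals (−1 − √n)/2. -/
open scoped Classical

/-! Jacobi's theta function blows up at a rational point `a / b` (`a * b` even) at a rate
governed by the Gauss sum `G(a, b) = ∑ exp (π i a r² / b)`, `0 ≤ r < b`: grouping the series by
residue classes mod `b` and applying Poisson summation to each class gives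
`b θ(a / b - 1 / u) / √(-i u) → G(a, b)` as `im u → ∞`. Since `τ ↦ -1 / τ` exchanges `a / b` and
`-b / a`, the functional equation of `θ` becomes the Landsberg–Schaar reciprocity between
`G(a, b)` and `G(-b, a)`; for `a = 2` the second sum has two terms, which evaluates
`∑ exp (2 π i r² / n)`, sign included. The sums over residues and non-residues are then determined
by their sum `-1` and their difference, which is the Gauss sum. -/

section

open Complex Filter Topology
open scoped Real

lemma ofReal_mul_cpow {c : ℝ} (hc : 0 < c) {z : ℂ} (hz : z ≠ 0) (s : ℂ) :
    (c * z) ^ s = (c : ℂ) ^ s * z ^ s := by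
  have hc' : (c : ℂ) ≠ 0 := ofReal_ne_zero.2 hc.ne'
  rw [cpow_def_of_ne_zero (mul_ne_zero hc' hz), cpow_def_of_ne_zero hc', cpow_def_of_ne_zero hz,
    log_ofReal_mul hc hz, ofReal_log hc.le, add_mul, Complex.exp_add]

lemma ofReal_cpow_one_half {c : ℝ} (hc : 0 ≤ c) : (c : ℂ) ^ (1 / 2 : ℂ) = √c := by
  rw [Real.sqrt_eq_rpow, ofReal_cpow hc]
  norm_num

lemma I_mul_cpow {z : ℂ} (hz : 0 < z.re) (s : ℂ) :
    (I * z) ^ s = cexp (π / 2 * I * s) * z ^ s := by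
  have hz0 : z ≠ 0 := fun h => by simp [h] at hz
  obtain ⟨harg_gt, harg_lt⟩ := abs_lt.1 (abs_arg_lt_pi_div_two_iff.2 (Or.inl hz))
  have hlog : log (I * z) = log I + log z :=
    log_mul I_ne_zero hz0 (by rw [arg_I]; constructor <;> linarith)
  rw [cpow_def_of_ne_zero (mul_ne_zero I_ne_zero hz0), cpow_def_of_ne_zero hz0, hlog, log_I,
    add_mul, Complex.exp_add]

lemma ofReal_mul_cpow_one_half_of_im_pos {c : ℝ} (hc : 0 < c) {τ : ℂ} (hτ : 0 < τ.im) :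
    (c * τ) ^ (1 / 2 : ℂ) = √c * cexp (π / 4 * I) * (-I * τ) ^ (1 / 2 : ℂ) := by
  have hre : 0 < (-I * τ).re := by simpa using hτ
  have hτ_eq : τ = I * (-I * τ) := by rw [← mul_assoc, mul_neg, I_mul_I, neg_neg, one_mul]
  have hτ0 : τ ≠ 0 := fun h => by simp [h] at hτ
  rw [ofReal_mul_cpow hc hτ0, ofReal_cpow_one_half hc.le, mul_assoc]
  conv_lhs => rw [hτ_eq, I_mul_cpow hre]
  ring_nf

lemma sqrt_div_mul_eq_sqrt_div_mul {a b : ℝ} (ha : 0 < a) (hb : 0 < b) :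
    √(b / a) * a = √(a / b) * b := by
  have hq : 0 < a / b := div_pos ha hb
  rw [← inv_div a b, Real.sqrt_inv, inv_mul_eq_div, div_eq_iff (Real.sqrt_pos.2 hq).ne',
    mul_right_comm, Real.mul_self_sqrt hq.le, div_mul_cancel₀ _ hb.ne']

lemma tendsto_jacobiTheta₂_comap_im_atTop (z : ℂ) :
    Tendsto (jacobiTheta₂ z) (comap im atTop) (𝓝 1) := by
  have hlim : ∑' k : ℤ, (if k = 0 then (1 : ℂ) else 0) = 1 := tsum_ite_eq ..
  rw [← hlim]
  refine tendsto_tsum_of_dominated_convergence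
    (summable_pow_mul_jacobiTheta₂_term_bound |z.im| one_pos 0) (fun k => ?_) ?_
  · rcases eq_or_ne k 0 with rfl | hk
    · simp [jacobiTheta₂_term, tendsto_const_nhds]
    · rw [if_neg hk, tendsto_zero_iff_norm_tendsto_zero]
      simp only [norm_jacobiTheta₂_term]
      have hcoeff : -π * (k : ℝ) ^ 2 < 0 :=
        mul_neg_of_neg_of_pos (neg_neg_of_pos Real.pi_pos) (by positivity)
      exact Real.tendsto_exp_atBot.comp (tendsto_atBot_add_const_right _ _
        (tendsto_comap.const_mul_atTop_of_neg hcoeff))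
  · filter_upwards [tendsto_comap.eventually_ge_atTop 1] with τ hτ k
    simpa only [pow_zero, one_mul] using norm_jacobiTheta₂_term_le one_pos le_rfl hτ k

lemma hasSum_exp_add_sq_div (x : ℂ) {w : ℂ} (hw : 0 < w.im) :
    HasSum (fun j : ℤ => cexp (-(π * I * (j + x) ^ 2 / w)))
      ((-I * w) ^ (1 / 2 : ℂ) * jacobiTheta₂ x w) := by
  have hw0 : w ≠ 0 := fun h => by simp [h] at hw
  have hroot : (-I * w) ^ (1 / 2 : ℂ) ≠ 0 := by simp [cpow_eq_zero_iff, hw0]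
  have him : 0 < (-1 / w).im := by
    rw [neg_div, one_div, neg_im, inv_im, neg_div, neg_neg]
    exact div_pos hw (normSq_pos.2 hw0)
  have hsum := (hasSum_jacobiTheta₂_term (-x / w) him).mul_left (cexp (-(π * I * x ^ 2 / w)))
  rw [← jacobiTheta₂_neg_left, jacobiTheta₂_functional_equation (-x) w]
  have hval : (-I * w) ^ (1 / 2 : ℂ) * (1 / (-I * w) ^ (1 / 2 : ℂ) *
      cexp (-π * I * (-x) ^ 2 / w) * jacobiTheta₂ (-x / w) (-1 / w)) =
        cexp (-(π * I * x ^ 2 / w)) * jacobiTheta₂ (-x / w) (-1 / w) := by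
    rw [neg_sq, ← mul_assoc, ← mul_assoc, mul_one_div_cancel hroot, one_mul]
    ring_nf
  rw [hval]
  refine hsum.congr_fun fun j => ?_
  rw [jacobiTheta₂_term, ← Complex.exp_add]
  congr 1
  ring

lemma hasSum_prod_of_fintype {M α β : Type*} [AddCommMonoid M] [TopologicalSpace M]
    [ContinuousAdd M] [Fintype β] {f : α × β → M} {g : β → M}
    (hf : ∀ b, HasSum (fun a => f (a, b)) (g b)) : HasSum f (∑ b, g b) := by
  have hfiber (b : β) : HasSum (fun p : α × β => if p.2 = b then f p else 0) (g b) := by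
    rw [← (Prod.mk_left_injective b).hasSum_iff]
    · simpa [Function.comp_def] using hf b
    · rintro ⟨a, b'⟩ hp
      exact if_neg fun hb => hp ⟨a, by rw [← hb]⟩
  simpa using hasSum_sum fun b (_ : b ∈ Finset.univ) => hfiber b

lemma hasSum_periodic_mul_exp_sq_div {N : ℕ} [NeZero N] {f : ℤ → ℂ} (hf : f.Periodic N) {u : ℂ}
    (hu : 0 < u.im) :
    HasSum (fun k : ℤ => f k * cexp (-(π * I * k ^ 2 / u)))
      ((-I * u) ^ (1 / 2 : ℂ) / N *
        ∑ r ∈ Finset.range N, f r * jacobiTheta₂ (r / N) (u / N ^ 2)) := by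
  have hN : (N : ℂ) ≠ 0 := NeZero.ne _
  have hNpos : 0 < N := NeZero.pos N
  have hu0 : u ≠ 0 := fun h => by simp [h] at hu
  have him : 0 < (u / N ^ 2).im := by
    rw [← Nat.cast_pow, div_natCast_im]
    positivity
  have hroot : (-I * (u / N ^ 2)) ^ (1 / 2 : ℂ) = (-I * u) ^ (1 / 2 : ℂ) / N := by
    have hscale : -I * (u / N ^ 2) = (((N : ℝ)⁻¹ ^ 2 : ℝ) : ℂ) * (-I * u) := by push_cast; ring
    rw [hscale, ofReal_mul_cpow (by positivity) (mul_ne_zero (neg_ne_zero.2 I_ne_zero) hu0),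
      ofReal_cpow_one_half (by positivity), Real.sqrt_sq (by positivity)]
    push_cast
    ring
  have hclass (r : Fin N) : HasSum
      (fun j : ℤ => f (j * N + r) * cexp (-(π * I * ((j * N + r : ℤ) : ℂ) ^ 2 / u)))
      (f r * ((-I * (u / N ^ 2)) ^ (1 / 2 : ℂ) * jacobiTheta₂ (r / N) (u / N ^ 2))) := by
    refine ((hasSum_exp_add_sq_div (r / N) him).mul_left (f r)).congr_fun fun j => ?_
    have hfr : f (j * N + r) = f r := by simpa [add_comm] using hf.int_mul j r
    rw [hfr]
    congr 3
    push_cast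
    field_simp
  rw [← (Int.divModEquiv N).symm.hasSum_iff, Finset.mul_sum, ← Fin.sum_univ_eq_sum_range
    fun r => (-I * u) ^ (1 / 2 : ℂ) / N * (f r * jacobiTheta₂ (r / N) (u / N ^ 2))]
  simp only [hroot, mul_left_comm (f _)] at hclass
  exact hasSum_prod_of_fintype hclass

/-- The generalized quadratic Gauss sum. It is normalised with `exp (π i a r² / b)` rather than
`exp (2 π i a r² / b)`, so that reciprocity exchanges `a` and `b`; the summand depends only on `r`
mod `b` when `a * b` is even. -/
noncomputable def quadraticGaussSum (a : ℤ) (b : ℕ) : ℂ :=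
  ∑ r ∈ Finset.range b, cexp (π * I * a * r ^ 2 / b)

lemma tendsto_jacobiTheta_div_sub_inv (a : ℤ) {b : ℕ} [NeZero b] (hab : Even (a * b)) :
    Tendsto (fun u : ℂ => b * jacobiTheta (a / b - 1 / u) / (-I * u) ^ (1 / 2 : ℂ))
      (comap im atTop) (𝓝 (quadraticGaussSum a b)) := by
  have hb : (b : ℂ) ≠ 0 := NeZero.ne _
  have hbpos : 0 < b := NeZero.pos b
  let f : ℤ → ℂ := fun k => cexp (π * I * a * k ^ 2 / b)
  have hf : f.Periodic b := by
    intro k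
    obtain ⟨m, hm⟩ := hab
    have hm' : (a * b : ℂ) = m + m := mod_cast hm
    refine Complex.exp_eq_exp_iff_exists_int.2 ⟨a * k + m, ?_⟩
    push_cast
    field_simp
    linear_combination (b : ℂ) * hm'
  have hscale : Tendsto (fun u : ℂ => u / b ^ 2) (comap im atTop) (comap im atTop) := by
    refine tendsto_comap_iff.2 ?_
    simp only [Function.comp_def, ← Nat.cast_pow, div_natCast_im]
    exact tendsto_comap.atTop_div_const (by positivity)
  have hlim : Tendsto
      (fun u : ℂ => ∑ r ∈ Finset.range b, f r * jacobiTheta₂ (r / b) (u / b ^ 2))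
      (comap im atTop) (𝓝 (∑ r ∈ Finset.range b, f r * 1)) :=
    tendsto_finsetSum _ fun r _ =>
      ((tendsto_jacobiTheta₂_comap_im_atTop _).comp hscale).const_mul _
  simp only [mul_one] at hlim
  refine hlim.congr' ?_
  filter_upwards [tendsto_comap.eventually_gt_atTop 0] with u hu
  have hu0 : u ≠ 0 := fun h => by simp [h] at hu
  have htheta : jacobiTheta (a / b - 1 / u) = ∑' k : ℤ, f k * cexp (-(π * I * k ^ 2 / u)) := by
    refine tsum_congr fun k => ?_
    rw [← Complex.exp_add]
    congr 1
    ring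
  rw [htheta, (hasSum_periodic_mul_exp_sq_div hf hu).tsum_eq]
  field_simp

lemma jacobiTheta_eq_neg_one_div (τ : ℂ) :
    jacobiTheta τ = jacobiTheta (-1 / τ) / (-I * τ) ^ (1 / 2 : ℂ) := by
  rw [jacobiTheta_eq_jacobiTheta₂, jacobiTheta_eq_jacobiTheta₂, jacobiTheta₂_functional_equation]
  simp [div_eq_inv_mul]

-- The second argument `u' = (a / b)² u - a / b`, `u = i t`, solves
-- `-1 / (a / b - 1 / u) = -b / a - 1 / u'`.
lemma jacobiTheta_div_sub_inv_reciprocity {a b : ℕ} (ha : a ≠ 0) (hb : b ≠ 0) {t : ℝ}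
    (ht : 0 < t) :
    b * jacobiTheta (a / b - 1 / (I * t)) / (-I * (I * t)) ^ (1 / 2 : ℂ) =
      √(b / a) * cexp (π / 4 * I) *
        (a * jacobiTheta (-b / a - 1 / ((a / b) ^ 2 * (I * t) - a / b)) /
          (-I * ((a / b) ^ 2 * (I * t) - a / b)) ^ (1 / 2 : ℂ)) := by
  have ht' : (t : ℂ) ≠ 0 := ofReal_ne_zero.2 ht.ne'
  have hq : (0 : ℝ) < a / b := by positivity
  set τ : ℂ := a / b - 1 / (I * t) with hτ
  have hτ_eq : τ = ((a / b : ℝ) : ℂ) + (t⁻¹ : ℝ) * I := by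
    simp only [hτ, one_div, mul_inv, inv_I]
    push_cast
    ring
  have him : 0 < τ.im := by simpa [hτ_eq] using ht
  have hτ0 : τ ≠ 0 := fun h => by simp [h] at him
  have hu : (a / b) ^ 2 * (I * t) - a / b = a / b * τ * (I * t) := by
    rw [hτ]
    field_simp
  have hinv : -b / a - 1 / (a / b * τ * (I * t)) = -1 / τ := by
    have : (b : ℂ) * τ * (I * t) = a * (I * t) - b := by rw [hτ]; field_simp
    field_simp
    linear_combination -this
  have hroot : (-I * (a / b * τ * (I * t))) ^ (1 / 2 : ℂ) =
      √(a / b) * √t * cexp (π / 4 * I) * (-I * τ) ^ (1 / 2 : ℂ) := by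
    have : -I * (a / b * τ * (I * t)) = ((a / b * t : ℝ) : ℂ) * τ := by
      push_cast
      linear_combination (-(a / b * τ * t : ℂ)) * I_sq
    rw [this, ofReal_mul_cpow_one_half_of_im_pos (mul_pos hq ht) him, Real.sqrt_mul hq.le,
      ofReal_mul]
  have hroot' : (-I * (I * t)) ^ (1 / 2 : ℂ) = √t := by
    rw [← mul_assoc, neg_mul, I_mul_I, neg_neg, one_mul, ofReal_cpow_one_half ht.le]
  have hsqrt : (√(b / a) : ℂ) * a = √(a / b) * b :=
    mod_cast sqrt_div_mul_eq_sqrt_div_mul (a := (a : ℝ)) (b := b) (by positivity) (by positivity)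
  have hs : (√(a / b) : ℂ) ≠ 0 := ofReal_ne_zero.2 (Real.sqrt_pos.2 hq).ne'
  have hst : (√t : ℂ) ≠ 0 := ofReal_ne_zero.2 (Real.sqrt_pos.2 ht).ne'
  rw [hu, hinv, hroot, hroot', jacobiTheta_eq_neg_one_div τ]
  field_simp
  linear_combination -(jacobiTheta (-(1 / τ))) * hsqrt

lemma quadraticGaussSum_reciprocity {a b : ℕ} (ha : a ≠ 0) (hb : b ≠ 0) (hab : Even (a * b)) :
    quadraticGaussSum a b = √(b / a) * cexp (π / 4 * I) * quadraticGaussSum (-b) a := by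
  have : NeZero a := ⟨ha⟩
  have : NeZero b := ⟨hb⟩
  have hray : Tendsto (fun t : ℝ => I * t) atTop (comap im atTop) := by
    simp only [tendsto_comap_iff, Function.comp_def, I_mul_im, ofReal_re]
    exact tendsto_id
  have hray' : Tendsto (fun t : ℝ => ((a / b) ^ 2 * (I * t) - a / b : ℂ)) atTop
      (comap im atTop) := by
    have him (t : ℝ) : ((a / b) ^ 2 * (I * t) - a / b : ℂ).im = (a / b) ^ 2 * t := by
      have : ((a / b) ^ 2 * (I * t) - a / b : ℂ) =
          ((-(a / b) : ℝ) : ℂ) + (((a / b) ^ 2 * t : ℝ) : ℂ) * I := by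
        push_cast
        ring
      rw [this]
      simp [-ofReal_div, -ofReal_neg, -ofReal_mul, -ofReal_pow]
    simp only [tendsto_comap_iff, Function.comp_def, him]
    exact tendsto_id.const_mul_atTop (by positivity)
  have hleft := (tendsto_jacobiTheta_div_sub_inv a (mod_cast hab)).comp hray
  have hright := ((tendsto_jacobiTheta_div_sub_inv (-b) (b := a)
    (by rw [neg_mul, even_neg, mul_comm]; exact_mod_cast hab)).comp hray').const_mul
      (√(b / a) * cexp (π / 4 * I))
  refine tendsto_nhds_unique (hleft.congr' ?_) hright
  filter_upwards [eventually_gt_atTop 0] with t ht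
  simpa using jacobiTheta_div_sub_inv_reciprocity ha hb ht

lemma quadraticGaussSum_two (n : ℕ) :
    quadraticGaussSum 2 n = √n * ((1 + I) * (1 + (-I) ^ n) / 2) := by
  rcases eq_or_ne n 0 with rfl | hn
  · simp [quadraticGaussSum]
  have h := quadraticGaussSum_reciprocity two_ne_zero hn (even_two_mul n)
  have hsum : quadraticGaussSum (-n) 2 = 1 + (-I) ^ n := by
    have : cexp (-(π * I * n) / 2) = (-I) ^ n := by
      rw [← exp_neg_pi_div_two_mul_I, ← Complex.exp_nat_mul]
      congr 1
      ring
    simp [quadraticGaussSum, Finset.sum_range_succ, this]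
  have hphase : cexp (π / 4 * I) = √2 / 2 * (1 + I) := by
    have : cexp (((π / 4 : ℝ) : ℂ) * I) = √2 / 2 * (1 + I) := by
      rw [exp_mul_I, ← ofReal_cos, ← ofReal_sin, Real.cos_pi_div_four, Real.sin_pi_div_four]
      push_cast
      ring
    simpa using this
  have hsqrt : (√(n / 2) : ℂ) * √2 = √n := by
    rw [← ofReal_mul, ← Real.sqrt_mul (by positivity), div_mul_cancel₀ _ two_ne_zero]
  rw [Nat.cast_ofNat, hsum, hphase] at h
  rw [h, ← hsqrt]
  push_cast
  ring

lemma quadraticGaussSum_two_of_mod_four_eq_one {n : ℕ} (h4 : n % 4 = 1) :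
    quadraticGaussSum 2 n = √n := by
  have hpow : (-I) ^ n = -I := by
    rw [← Nat.div_add_mod n 4, h4, pow_succ, pow_mul, neg_pow I, I_pow_four]
    norm_num
  rw [quadraticGaussSum_two, hpow]
  linear_combination -(√n / 2 : ℂ) * I_sq

lemma stdAddChar_eq_exp_pow_val {n : ℕ} [NeZero n] (a : ZMod n) :
    ZMod.stdAddChar a = cexp (2 * π * I / n) ^ a.val := by
  have h := ZMod.stdAddChar_coe (N := n) (a.val : ℤ)
  rw [Int.cast_natCast, ZMod.natCast_zmod_val] at h
  rw [h, ← Complex.exp_nat_mul, Int.cast_natCast]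
  congr 1
  ring

lemma sum_zmod_eq_sum_range {M : Type*} [AddCommMonoid M] {n : ℕ} [NeZero n] (f : ZMod n → M) :
    ∑ x, f x = ∑ k ∈ Finset.range n, f k :=
  Finset.sum_nbij' ZMod.val Nat.cast (fun x _ => Finset.mem_range.2 x.val_lt)
    (fun _ _ => Finset.mem_univ _) (fun x _ => ZMod.natCast_zmod_val x)
    (fun _ hk => ZMod.val_cast_of_lt (Finset.mem_range.1 hk))
    (fun x _ => by rw [ZMod.natCast_zmod_val])

lemma sum_stdAddChar_sq (n : ℕ) [NeZero n] :
    ∑ x : ZMod n, ZMod.stdAddChar (x ^ 2) = quadraticGaussSum 2 n := by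
  rw [sum_zmod_eq_sum_range, quadraticGaussSum]
  refine Finset.sum_congr rfl fun k _ => ?_
  have h := ZMod.stdAddChar_coe (N := n) (k ^ 2)
  push_cast at h ⊢
  rw [h]
  congr 1
  ring

lemma sum_addChar_isSquare_add_sum_addChar_not_isSquare {A R : Type*} [Ring A] [Fintype A]
    [DecidableEq A] [CommRing R] [IsDomain R] {ψ : AddChar A R} (hψ : ψ ≠ 1) :
    ∑ a with a ≠ 0 ∧ IsSquare a, ψ a + ∑ b with b ≠ 0 ∧ ¬IsSquare b, ψ b = -1 := by
  rw [← Finset.filter_filter, ← Finset.filter_filter, Finset.sum_filter_add_sum_filter_not,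
    Finset.filter_ne', Finset.sum_erase_eq_sub (Finset.mem_univ 0),
    AddChar.sum_eq_zero_of_ne_one hψ, ψ.map_zero_eq_one, zero_sub]

lemma exists_units_sq_eq_iff_isSquare {F : Type*} [Field F] {a : F} (ha : a ≠ 0) :
    (∃ x : Fˣ, (x : F) ^ 2 = a) ↔ IsSquare a := by
  rw [isSquare_iff_exists_sq]
  refine ⟨fun ⟨x, hx⟩ => ⟨x, hx.symm⟩, fun ⟨x, hx⟩ => ?_⟩
  have hx0 : x ≠ 0 := by rintro rfl; simp [hx] at ha
  exact ⟨Units.mk0 x hx0, hx.symm⟩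

section FiniteField
variable {F : Type*} [Field F] [Fintype F] [DecidableEq F]

lemma sum_comp_sq_eq_sum_quadraticChar {R : Type*} [CommRing R] (hF : ringChar F ≠ 2) (g : F → R) :
    ∑ x, g (x ^ 2) = ∑ a, (quadraticChar F a + 1) * g a := by
  rw [← Finset.sum_fiberwise (g := fun x : F => x ^ 2)]
  refine Finset.sum_congr rfl fun a _ => ?_
  have hcard := congrArg (Int.cast : ℤ → R) (quadraticChar_card_sqrts hF a)
  rw [Set.toFinset_ofPred] at hcard
  push_cast at hcard
  rw [← hcard, ← nsmul_eq_mul]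
  refine Finset.sum_eq_card_nsmul fun x hx => ?_
  rw [(Finset.mem_filter.1 hx).2]

lemma sum_comp_sq_eq_add_two_mul {R : Type*} [CommRing R] (hF : ringChar F ≠ 2) (g : F → R) :
    ∑ x, g (x ^ 2) = g 0 + 2 * ∑ a with a ≠ 0 ∧ IsSquare a, g a := by
  have hcount (a : F) (ha : a ≠ 0) :
      ((quadraticChar F a + 1 : ℤ) : R) * g a = 2 * if IsSquare a then g a else 0 := by
    split_ifs with hsq
    · rw [(quadraticChar_one_iff_isSquare ha).2 hsq]
      norm_num
    · rw [quadraticChar_neg_one_iff_not_isSquare.2 hsq]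
      simp
  push_cast at hcount
  rw [sum_comp_sq_eq_sum_quadraticChar hF g, ← Finset.add_sum_erase _ _ (Finset.mem_univ 0),
    Finset.sum_congr rfl fun a ha => hcount a (Finset.ne_of_mem_erase ha), ← Finset.mul_sum,
    ← Finset.sum_filter, ← Finset.filter_ne', Finset.filter_filter]
  simp

lemma two_mul_sum_addChar_isSquare {R : Type*} [CommRing R] (hF : ringChar F ≠ 2)
    (ψ : AddChar F R) :
    2 * ∑ a with a ≠ 0 ∧ IsSquare a, ψ a = ∑ x, ψ (x ^ 2) - 1 := by
  rw [sum_comp_sq_eq_add_two_mul hF ψ, ψ.map_zero_eq_one, add_sub_cancel_left]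

end FiniteField

end

lemma two_pow_two_pow_add_one_mod_four {ν : ℕ} (hν : 1 ≤ ν) : (2 ^ 2 ^ ν + 1) % 4 = 1 := by
  have h : 4 ∣ 2 ^ 2 ^ ν := pow_dvd_pow 2 (Nat.le_self_pow (n := ν) (by lia) 2)
  lia

theorem stmt10_general (n : ℕ) [Fact n.Prime] (h4 : n % 4 = 1) :
    (∑ a ∈ Finset.univ.filter
        (fun a : ZMod n => a ≠ 0 ∧ ∃ x : (ZMod n)ˣ, (x : ZMod n) ^ 2 = a),
      Complex.exp (2 * Real.pi * Complex.I / n) ^ a.val) =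
      (((-1 + Real.sqrt n) / 2 : ℝ) : ℂ) ∧
    (∑ b ∈ Finset.univ.filter
        (fun b : ZMod n => b ≠ 0 ∧ ¬∃ x : (ZMod n)ˣ, (x : ZMod n) ^ 2 = b),
      Complex.exp (2 * Real.pi * Complex.I / n) ^ b.val) =
      (((-1 - Real.sqrt n) / 2 : ℝ) : ℂ) := by
  have hchar : ringChar (ZMod n) ≠ 2 := by
    rw [ZMod.ringChar_zmod_n]
    rintro rfl
    simp at h4
  have hnontrivial : (ZMod.stdAddChar : AddChar (ZMod n) ℂ) ≠ 1 := by
    simpa using ZMod.isPrimitive_stdAddChar n one_ne_zero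
  have hdiff := two_mul_sum_addChar_isSquare hchar (ZMod.stdAddChar : AddChar (ZMod n) ℂ)
  have hsum := sum_addChar_isSquare_add_sum_addChar_not_isSquare hnontrivial
  rw [sum_stdAddChar_sq, quadraticGaussSum_two_of_mod_four_eq_one h4] at hdiff
  simp only [← stdAddChar_eq_exp_pow_val]
  rw [Finset.filter_congr fun a _ => and_congr_right fun ha => exists_units_sq_eq_iff_isSquare ha,
    Finset.filter_congr fun b _ => and_congr_right fun hb =>
      not_congr (exists_units_sq_eq_iff_isSquare hb)]
  push_cast
  constructor
  · linear_combination hdiff / 2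
  · linear_combination hsum - hdiff / 2

/-- For a Fermat prime `n = 2 ^ 2 ^ ν + 1` (`ν ≥ 1`) and
`ζ = exp (2 π i / n)`, the sum of `ζ ^ a` over the nonzero quadratic residues `a` mod `n`
equals `(-1 + √n) / 2`, and the sum of `ζ ^ b` over the quadratic non-residues `b` mod `n`
equals `(-1 - √n) / 2`. -/
theorem stmt10 (ν n : ℕ) [NeZero n] (hν : 1 ≤ ν) (hn : n = 2 ^ (2 ^ ν) + 1) (hp : n.Prime) :
    (∑ a ∈ Finset.univ.filter
        (fun a : ZMod n => a ≠ 0 ∧ ∃ x : (ZMod n)ˣ, (x : ZMod n) ^ 2 = a),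
      Complex.exp (2 * Real.pi * Complex.I / n) ^ a.val) =
      (((-1 + Real.sqrt n) / 2 : ℝ) : ℂ) ∧
    (∑ b ∈ Finset.univ.filter
        (fun b : ZMod n => b ≠ 0 ∧ ¬∃ x : (ZMod n)ˣ, (x : ZMod n) ^ 2 = b),
      Complex.exp (2 * Real.pi * Complex.I / n) ^ b.val) =
      (((-1 - Real.sqrt n) / 2 : ℝ) : ℂ) := by
  have : Fact n.Prime := ⟨hp⟩
  exact stmt10_general n (hn ▸ two_pow_two_pow_add_one_mod_four hν)
end

section
/- Let n = 65537 and ζ = exp(2πi/65537). Let H be the subgroup of fourth powers in the group of units of ZMod 65537 (a subgroup of index 4), and set η₀ = Σ_{a ∈ H} ζ^a and η₂ = Σ_{a ∈ 9·H} ζ^a, where 9·H is the coset of H containing 9 = 3². Then η₀ · η₂ = −4096, i.e. the product of these two quartic Gaussian periods equals −(65537 − 1)/16. -/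
/-!
Let `χ` be a quartic character of a field with `q ≡ 1 [MOD 8]` elements, `g j` the Gauss sum of
`χ ^ j`, and `J = J(χ, χ ^ 2)`. Expanding the periods in Gauss sums gives
`16 η₀ η₂ = (g 2 - 1) ^ 2 - (g 1 + g 3) ^ 2 = 1 - q - 2 (1 + Re J) g 2`, because
`g 1 * g 3 = q = g 2 ^ 2`, `g 1 ^ 2 = J * g 2` and `g 3 ^ 2 = conj J * g 2`.
Now `J` is a Gaussian integer of norm `q` with `J ≡ -q` modulo `2 (i - 1)`. If
`q = (4 s) ^ 2 + 1` is prime, it is a sum of two squares in only one way, so `J` has parts `± 1` and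
`± 4 s` in some order, and the congruence selects `Re J = -1`.
-/

open Finset

theorem sq_eq_sq_or_sq_eq_sq_of_sq_add_sq_eq_prime {p a b c d : ℤ} (hp : Prime p)
    (hab : a ^ 2 + b ^ 2 = p) (hcd : c ^ 2 + d ^ 2 = p) : a ^ 2 = c ^ 2 ∨ a ^ 2 = d ^ 2 := by
  have eq_of_dvd {c d : ℤ} (hcd : c ^ 2 + d ^ 2 = p) (hdvd : p ∣ a * d - b * c) :
      a ^ 2 = c ^ 2 ∨ a ^ 2 = d ^ 2 := by
    obtain ⟨k, hk⟩ := hdvd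
    have brahmagupta : (p * k) ^ 2 + (a * c + b * d) ^ 2 = p ^ 2 := by
      rw [← hk, ← hcd]
      linear_combination (c ^ 2 + d ^ 2) * (hab.trans hcd.symm)
    rcases eq_or_ne k 0 with rfl | hk₀
    · left
      apply mul_left_cancel₀ hp.ne_zero
      linear_combination (a * d + b * c) * hk - a ^ 2 * hcd + c ^ 2 * hab
    · right
      have one_le_sq : 1 ≤ k ^ 2 := Int.add_one_le_of_lt (sq_pos_of_ne_zero hk₀)
      have orthogonal : a * c + b * d = 0 := by
        rw [← sq_nonpos_iff]
        nlinarith [mul_le_mul_of_nonneg_left one_le_sq (sq_nonneg p)]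
      apply mul_left_cancel₀ hp.ne_zero
      linear_combination (a * c - b * d) * orthogonal - a ^ 2 * hcd + d ^ 2 * hab
  have hdvd : p ∣ (a * d - b * c) * (a * d + b * c) :=
    ⟨a ^ 2 - c ^ 2, by linear_combination a ^ 2 * hcd - c ^ 2 * hab⟩
  rcases hp.dvd_or_dvd hdvd with h | h
  · exact eq_of_dvd hcd h
  · simpa using eq_of_dvd (c := -c) (by simpa using hcd) (by simpa [sub_eq_add_neg] using h)

theorem eq_neg_one_of_sq_add_sq_eq_prime {a b s : ℤ} (hp : Prime ((4 * s) ^ 2 + 1))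
    (hab : a ^ 2 + b ^ 2 = (4 * s) ^ 2 + 1) (hb : Even b) (hmod : a + 1 ≡ b [ZMOD 4]) :
    a = -1 := by
  rcases sq_eq_sq_or_sq_eq_sq_of_sq_add_sq_eq_prime hp hab
    (c := 4 * s) (d := 1) (by rw [one_pow]) with ha | ha
  · have hb_sq : b ^ 2 = 1 := by linear_combination hab - ha
    exact absurd (hb.pow_of_ne_zero two_ne_zero) (by simp [hb_sq])
  · have hb_sq : b ^ 2 = (4 * s) ^ 2 := by linear_combination hab - ha
    have not_modEq : ¬1 + 1 ≡ b [ZMOD 4] := by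
      rcases sq_eq_sq_iff_eq_or_eq_neg.mp hb_sq with rfl | rfl <;> rw [Int.modEq_iff_dvd] <;> omega
    exact (sq_eq_one_iff.mp (ha.trans (one_pow 2))).resolve_left
      (by rintro rfl; exact not_modEq hmod)

theorem exists_units_pow_eq_neg_one {F : Type*} [Field F] [Fintype F] {n : ℕ}
    (hn : 2 * n ∣ Fintype.card F - 1) : ∃ b : Fˣ, (b : F) ^ n = -1 := by
  classical
  obtain ⟨k, hk⟩ := hn
  obtain ⟨g, hg⟩ := IsCyclic.exists_ofOrder_eq_natCard (α := Fˣ)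
  have hg : IsPrimitiveRoot (g : F) (Fintype.card F - 1) := by
    rw [← Fintype.card_units, ← Nat.card_eq_fintype_card, ← hg, IsPrimitiveRoot.coe_units_iff]
    exact IsPrimitiveRoot.orderOf g
  have hcard : 0 < Fintype.card F - 1 := by have := Fintype.one_lt_card (α := F); omega
  refine ⟨g ^ k, ?_⟩
  rw [Units.val_pow_eq_pow_val, ← pow_mul]
  exact (hg.pow hcard (b := 2) (by rw [hk]; ring)).eq_neg_one_of_two_right

section MulChar

variable {F R : Type*} [Field F] [Finite F] [CommRing R]

theorem mulChar_apply_eq_one_iff [Nontrivial R] (χ : MulChar F R) (a : F) :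
    χ a = 1 ↔ ∃ u : Fˣ, (u : F) ^ orderOf χ = a := by
  constructor
  · intro h
    have a_ne_zero : a ≠ 0 := by
      rintro rfl
      exact zero_ne_one (χ.map_zero.symm.trans h)
    lift a to Fˣ using a_ne_zero.isUnit
    obtain ⟨g, hg⟩ := IsCyclic.exists_generator (α := Fˣ)
    obtain ⟨k, rfl⟩ := mem_powers_iff_mem_zpowers.mpr (hg a)
    have hk : χ ^ k = 1 := by
      rw [MulChar.eq_iff hg, MulChar.pow_apply_coe, MulChar.one_apply_coe, ← map_pow]
      exact h
    obtain ⟨m, rfl⟩ := orderOf_dvd_of_pow_eq_one hk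
    exact ⟨g ^ m, by push_cast; ring⟩
  · rintro ⟨u, rfl⟩
    rw [map_pow, ← MulChar.pow_apply_coe, pow_orderOf_eq_one, MulChar.one_apply_coe]

variable [IsDomain R]

open scoped Classical in
theorem sum_range_orderOf_pow_apply (χ : MulChar F R) (a : F) :
    ∑ j ∈ range (orderOf χ), (χ ^ j) a =
      if ∃ u : Fˣ, (u : F) ^ orderOf χ = a then (orderOf χ : R) else 0 := by
  simp only [← mulChar_apply_eq_one_iff]
  by_cases ha : IsUnit a
  · lift a to Fˣ using ha
    simp only [MulChar.pow_apply_coe]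
    split_ifs with h
    · simp [h]
    · have := geom_sum_mul (χ a) (orderOf χ)
      rw [← MulChar.pow_apply_coe, pow_orderOf_eq_one, MulChar.one_apply_coe, sub_self] at this
      exact (mul_eq_zero.mp this).resolve_right (sub_ne_zero.mpr h)
  · simp [MulChar.map_nonunit _ ha]

theorem mulChar_apply_sq_eq_neg_one {χ : MulChar F R} (hχ : orderOf χ = 4) {d : F}
    (hd : ¬IsSquare d) : χ (d ^ 2) = -1 := by
  have hχ₂ : orderOf (χ ^ 2) = 2 := by rw [orderOf_pow_of_dvd two_ne_zero (by simp [hχ]), hχ]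
  have d_unit : IsUnit d := isUnit_iff_ne_zero.mpr fun h ↦ hd (h ▸ IsSquare.zero)
  have ne_one : (χ ^ 2) d ≠ 1 := by
    rw [ne_eq, mulChar_apply_eq_one_iff, hχ₂]
    rintro ⟨u, rfl⟩
    exact hd (IsSquare.sq _)
  have sq_eq_one : (χ ^ 2) d ^ 2 = 1 := by
    rw [← MulChar.pow_apply' _ two_ne_zero, orderOf_dvd_iff_pow_eq_one.mp hχ₂.dvd,
      MulChar.one_apply d_unit]
  rw [map_pow, ← MulChar.pow_apply' _ two_ne_zero]
  exact (sq_eq_one_iff.mp sq_eq_one).resolve_left ne_one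

theorem sub_one_dvd_mulChar_apply_sub_one {n : ℕ} [NeZero n] {χ : MulChar F R} (hχ : χ ^ n = 1)
    {μ : R} (hμ : IsPrimitiveRoot μ n) {x : F} (hx : x ≠ 0) : μ - 1 ∣ χ x - 1 := by
  obtain ⟨k, -, hk⟩ := MulChar.exists_apply_eq_pow hχ hμ hx
  exact hk ▸ sub_one_dvd_pow_sub_one μ k

end MulChar

section JacobiSum

variable {F : Type*} [Field F] [Fintype F]

theorem mul_dvd_jacobiSum_add_card {R : Type*} [CommRing R] [IsDomain R] {χ φ : MulChar F R}
    (hχ : χ ≠ 1) (hφ : φ ≠ 1) {a b : R} (ha : ∀ x ≠ 0, a ∣ χ x - 1) (hb : ∀ x ≠ 0, b ∣ φ x - 1) :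
    a * b ∣ jacobiSum χ φ + Fintype.card F := by
  have jacobiSum_eq : jacobiSum χ φ + Fintype.card F = ∑ x, (χ x - 1) * (φ (1 - x) - 1) := by
    have hφ_sum : ∑ x, φ (1 - x) = 0 :=
      ((Equiv.subLeft 1).sum_comp φ).trans (MulChar.sum_eq_zero_of_ne_one hφ)
    simp only [sub_mul, mul_sub, sum_sub_distrib, one_mul, mul_one, hφ_sum,
      MulChar.sum_eq_zero_of_ne_one hχ, jacobiSum, sum_const, card_univ, nsmul_eq_mul]
    ring
  rw [jacobiSum_eq]
  refine dvd_sum fun x _ ↦ ?_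
  rcases eq_or_ne x 0 with rfl | hx₀
  · simp
  rcases eq_or_ne x 1 with rfl | hx₁
  · simp
  exact mul_dvd_mul (ha x hx₀) (hb (1 - x) (sub_ne_zero.mpr hx₁.symm))

theorem gaussianInt_toComplex_injective : Function.Injective GaussianInt.toComplex :=
  fun _ _ ↦ GaussianInt.toComplex_inj.mp

theorem conj_jacobiSum {A : Type*} [CommRing A] [Fintype A] (χ φ : MulChar A ℂ) :
    starRingEnd ℂ (jacobiSum χ φ) = jacobiSum χ⁻¹ φ⁻¹ := by
  simp only [jacobiSum, map_sum, map_mul, starRingEnd_apply, MulChar.star_apply']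

theorem norm_jacobiSum {χ φ : MulChar F GaussianInt} (hχ : χ ≠ 1) (hφ : φ ≠ 1) (hχφ : χ * φ ≠ 1) :
    (jacobiSum χ φ).norm = Fintype.card F := by
  have ringChar_ne : ringChar ℂ ≠ ringChar F := by
    rw [ringChar.eq_zero]
    exact (CharP.ringChar_ne_zero_of_finite F).symm
  rw [← Int.cast_inj (α := ℂ), GaussianInt.intCast_complex_norm, ← Complex.mul_conj,
    ← jacobiSum_ringHomComp, conj_jacobiSum, jacobiSum_mul_jacobiSum_inv ringChar_ne,
    Int.cast_natCast]
  · exact (MulChar.ringHomComp_ne_one_iff gaussianInt_toComplex_injective).mpr hχ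
  · exact (MulChar.ringHomComp_ne_one_iff gaussianInt_toComplex_injective).mpr hφ
  · rw [← MulChar.ringHomComp_mul]
    exact (MulChar.ringHomComp_ne_one_iff gaussianInt_toComplex_injective).mpr hχφ

theorem isPrimitiveRoot_gaussianInt_sqrtd : IsPrimitiveRoot (Zsqrtd.sqrtd : GaussianInt) 4 := by
  rw [← IsPrimitiveRoot.map_iff_of_injective gaussianInt_toComplex_injective]
  simpa [GaussianInt.toComplex_def] using Complex.isPrimitiveRoot_I

theorem dvd_jacobiSum_sq_add_card {χ : MulChar F GaussianInt} (hχ : orderOf χ = 4) :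
    (Zsqrtd.sqrtd - 1) * (-1 - 1) ∣ jacobiSum χ (χ ^ 2) + (Fintype.card F : GaussianInt) := by
  have hχ₄ : χ ^ 4 = 1 := hχ ▸ pow_orderOf_eq_one χ
  have hχ₂ : (χ ^ 2) ^ 2 = 1 := by rw [← pow_mul, hχ₄]
  have ne_one {k : ℕ} (hk : k ≠ 0) (hk₄ : k < 4) : χ ^ k ≠ 1 :=
    pow_ne_one_of_lt_orderOf hk (hχ ▸ hk₄)
  exact mul_dvd_jacobiSum_add_card (pow_one χ ▸ ne_one one_ne_zero (by norm_num))
    (ne_one two_ne_zero (by norm_num))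
    (fun _ ↦ sub_one_dvd_mulChar_apply_sub_one hχ₄ isPrimitiveRoot_gaussianInt_sqrtd)
    (fun _ ↦ sub_one_dvd_mulChar_apply_sub_one hχ₂ (IsPrimitiveRoot.neg_one 0 (by norm_num)))

theorem re_jacobiSum_sq_eq_neg_one {χ : MulChar F GaussianInt} (hχ : orderOf χ = 4)
    (hF : (Fintype.card F).Prime) {s : ℕ} (hs : Fintype.card F = (4 * s) ^ 2 + 1) :
    (jacobiSum χ (χ ^ 2)).re = -1 := by
  set J := jacobiSum χ (χ ^ 2) with hJ
  have card_eq : (Fintype.card F : ℤ) = (4 * s) ^ 2 + 1 := by exact_mod_cast hs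
  have norm_eq : J.re ^ 2 + J.im ^ 2 = (4 * s) ^ 2 + 1 := by
    have χ_ne_one : χ ≠ 1 := fun h ↦ by simp [h] at hχ
    have χ_sq_ne_one : χ ^ 2 ≠ 1 := pow_ne_one_of_lt_orderOf two_ne_zero (by omega)
    have χ_cube_ne_one : χ * χ ^ 2 ≠ 1 :=
      pow_succ' χ 2 ▸ pow_ne_one_of_lt_orderOf three_ne_zero (by omega)
    rw [← card_eq, ← norm_jacobiSum χ_ne_one χ_sq_ne_one χ_cube_ne_one, Zsqrtd.norm]
    ring
  obtain ⟨⟨x, y⟩, hz⟩ := dvd_jacobiSum_sq_add_card hχ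
  have re_eq : J.re + ((4 * s) ^ 2 + 1) = 2 * x + 2 * y := by
    simpa [card_eq, ← hJ] using congrArg Zsqrtd.re hz
  have im_eq : J.im = 2 * y - 2 * x := by
    simpa [← hJ, sub_eq_add_neg] using congrArg Zsqrtd.im hz
  refine eq_neg_one_of_sq_add_sq_eq_prime ?_ norm_eq ⟨y - x, by rw [im_eq]; ring⟩ ?_
  · rwa [← card_eq, ← Nat.prime_iff_prime_int]
  · refine Int.modEq_iff_dvd.mpr ⟨4 * s ^ 2 - x, ?_⟩
    linear_combination im_eq - re_eq

end JacobiSum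

section GaussSum

variable {F R : Type*} [Field F] [Fintype F] [CommRing R] [IsDomain R] {χ : MulChar F R}
  {ψ : AddChar F R}

theorem gaussSum_mul_gaussSum_inv (hχ : χ ≠ 1) (hψ : ψ ≠ 1) :
    gaussSum χ ψ * gaussSum χ⁻¹ ψ = χ (-1) * Fintype.card F := by
  rw [← mul_gaussSum_inv_eq_gaussSum χ⁻¹ ψ, MulChar.inv_apply', inv_neg_one, mul_left_comm,
    gaussSum_mul_gaussSum_eq_card hχ (.of_ne_one hψ)]

theorem sq_gaussSum_sq_eq_card_of_orderOf_eq_four (hχ : orderOf χ = 4) (hψ : ψ ≠ 1) :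
    gaussSum (χ ^ 2) ψ ^ 2 = Fintype.card F := by
  have χ_sq_ne_one : χ ^ 2 ≠ 1 := pow_ne_one_of_lt_orderOf two_ne_zero (by omega)
  have χ_sq_sq : (χ ^ 2) ^ 2 = 1 := by rw [← pow_mul, ← orderOf_dvd_iff_pow_eq_one, hχ]
  rw [gaussSum_sq χ_sq_ne_one (MulChar.isQuadratic_iff_sq_eq_one.mpr χ_sq_sq) (.of_ne_one hψ),
    MulChar.pow_apply' _ two_ne_zero, ← map_pow, neg_one_sq, map_one, one_mul]

theorem gaussSum_sq_eq_of_orderOf_eq_four (hχ : orderOf χ = 4) (hψ : ψ ≠ 1)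
    (hF : (Fintype.card F : R) ≠ 0) :
    gaussSum χ ψ ^ 2 = χ (-1) * jacobiSum χ (χ ^ 2) * gaussSum (χ ^ 2) ψ := by
  have χ_ne_one : χ ≠ 1 := fun h ↦ by simp [h] at hχ
  have χ_mul_sq : χ * χ ^ 2 = χ⁻¹ := by
    rw [eq_inv_iff_mul_eq_one, ← pow_succ', ← pow_succ, ← orderOf_dvd_iff_pow_eq_one, hχ]
  have jacobi : gaussSum χ⁻¹ ψ * jacobiSum χ (χ ^ 2) = gaussSum χ ψ * gaussSum (χ ^ 2) ψ := by
    rw [← χ_mul_sq]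
    exact jacobiSum_mul_nontrivial (χ_mul_sq ▸ inv_ne_one.mpr χ_ne_one) ψ
  apply mul_left_cancel₀ hF
  linear_combination (-gaussSum χ ψ ^ 2) * sq_gaussSum_sq_eq_card_of_orderOf_eq_four hχ hψ
    - gaussSum χ ψ * gaussSum (χ ^ 2) ψ * jacobi
    + jacobiSum χ (χ ^ 2) * gaussSum (χ ^ 2) ψ * gaussSum_mul_gaussSum_inv χ_ne_one hψ

end GaussSum

section GaussianPeriod

variable {F R : Type*} [Field F] [Fintype F] [DecidableEq F] [CommRing R]

/-- The Gaussian period of degree `n`: the sum of the additive character `ψ` over the coset of `c`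
modulo the group of nonzero `n`-th powers. -/
def gaussianPeriod (ψ : AddChar F R) (n : ℕ) (c : F) : R :=
  ∑ a ∈ univ.image (fun x : Fˣ ↦ c * (x : F) ^ n), ψ a

variable [IsDomain R]

theorem orderOf_mul_gaussianPeriod (χ : MulChar F R) (ψ : AddChar F R) (c : Fˣ) :
    orderOf χ * gaussianPeriod ψ (orderOf χ) c =
      ∑ j ∈ range (orderOf χ), (χ ^ j)⁻¹ c * gaussSum (χ ^ j) ψ := by
  classical
  have image_eq : univ.image (fun x : Fˣ ↦ (c : F) * (x : F) ^ orderOf χ) =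
      (univ.filter fun a : F ↦ ∃ u : Fˣ, (u : F) ^ orderOf χ = a).image ((c : F) * ·) := by
    ext
    simp
  simp_rw [← gaussSum_mulShift_eq, gaussSum, AddChar.mulShift_apply]
  rw [sum_comm]
  simp only [← sum_mul, sum_range_orderOf_pow_apply, gaussianPeriod, image_eq, ite_mul, zero_mul]
  rw [sum_image (mul_right_injective₀ c.ne_zero).injOn, mul_sum, sum_filter]

theorem four_mul_gaussianPeriod {χ : MulChar F R} (hχ : orderOf χ = 4) {ψ : AddChar F R}
    (hψ : ψ ≠ 1) (c : Fˣ) :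
    4 * gaussianPeriod ψ 4 (c : F) = -1 + χ⁻¹ c * gaussSum χ ψ + (χ ^ 2) c * gaussSum (χ ^ 2) ψ +
      χ c * gaussSum χ⁻¹ ψ := by
  have χ_cube : χ ^ 3 = χ⁻¹ := by
    rw [eq_inv_iff_mul_eq_one, ← pow_succ, ← orderOf_dvd_iff_pow_eq_one, hχ]
  have χ_sq_inv : (χ ^ 2)⁻¹ = χ ^ 2 := by
    rw [inv_eq_iff_mul_eq_one, ← pow_add, ← orderOf_dvd_iff_pow_eq_one, hχ]
  have expansion := orderOf_mul_gaussianPeriod χ ψ c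
  rw [hχ] at expansion
  simpa only [Nat.cast_ofNat, sum_range_succ, sum_range_zero, zero_add, pow_zero, pow_one, inv_one,
    MulChar.one_apply_coe, one_mul, gaussSum_one_left hψ, χ_sq_inv, χ_cube, inv_inv] using expansion

theorem sixteen_mul_gaussianPeriod_mul {χ : MulChar F R} (hχ : orderOf χ = 4) (hχ_neg : χ (-1) = 1)
    {ψ : AddChar F R} (hψ : ψ ≠ 1) (hF : (Fintype.card F : R) ≠ 0) {c : F} (hc : χ c = -1) :
    16 * (gaussianPeriod ψ 4 1 * gaussianPeriod ψ 4 c) = 1 - Fintype.card F -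
      (2 + jacobiSum χ (χ ^ 2) + jacobiSum χ⁻¹ (χ ^ 2)⁻¹) * gaussSum (χ ^ 2) ψ := by
  have c_ne_zero : c ≠ 0 := by
    rintro rfl
    exact neg_ne_zero.mpr one_ne_zero (hc.symm.trans χ.map_zero)
  lift c to Fˣ using c_ne_zero.isUnit
  have χ_sq_inv : (χ ^ 2)⁻¹ = χ ^ 2 := by
    rw [inv_eq_iff_mul_eq_one, ← pow_add, ← orderOf_dvd_iff_pow_eq_one, hχ]
  have χ_inv_neg : χ⁻¹ (-1) = 1 := by rw [MulChar.inv_apply', inv_neg_one, hχ_neg]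
  have χ_inv_c : χ⁻¹ c = -1 := by
    rw [MulChar.inv_apply_eq_inv, hc, ← Units.coe_neg_one, Ring.inverse_unit, inv_neg_one]
  have period_one : 4 * gaussianPeriod ψ 4 (1 : F) =
      -1 + gaussSum χ ψ + gaussSum (χ ^ 2) ψ + gaussSum χ⁻¹ ψ := by
    simpa using four_mul_gaussianPeriod hχ hψ 1
  have period_c : 4 * gaussianPeriod ψ 4 (c : F) =
      -1 - gaussSum χ ψ + gaussSum (χ ^ 2) ψ - gaussSum χ⁻¹ ψ := by
    rw [four_mul_gaussianPeriod hχ hψ, MulChar.pow_apply_coe, χ_inv_c, hc]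
    ring
  have gauss_sq := gaussSum_sq_eq_of_orderOf_eq_four hχ hψ hF
  have gauss_inv_sq := gaussSum_sq_eq_of_orderOf_eq_four ((orderOf_inv χ).trans hχ) hψ hF
  have gauss_mul := gaussSum_mul_gaussSum_inv (fun h ↦ by simp [h] at hχ : χ ≠ 1) hψ
  rw [hχ_neg, one_mul] at gauss_sq gauss_mul
  rw [χ_inv_neg, one_mul, inv_pow, χ_sq_inv] at gauss_inv_sq
  rw [χ_sq_inv]
  linear_combination 4 * gaussianPeriod ψ 4 (c : F) * period_one +
    (-1 + gaussSum χ ψ + gaussSum (χ ^ 2) ψ + gaussSum χ⁻¹ ψ) * period_c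
    + sq_gaussSum_sq_eq_card_of_orderOf_eq_four hχ hψ - gauss_sq - gauss_inv_sq - 2 * gauss_mul

theorem gaussianPeriod_one_mul_gaussianPeriod_sq {s : ℕ} (hF : (Fintype.card F).Prime)
    (hs : Fintype.card F = (4 * s) ^ 2 + 1) {ψ : AddChar F ℂ} (hψ : ψ ≠ 1) {d : F}
    (hd : ¬IsSquare d) :
    gaussianPeriod ψ 4 1 * gaussianPeriod ψ 4 (d ^ 2) = -(s : ℂ) ^ 2 := by
  have eight_dvd : 2 * 4 ∣ Fintype.card F - 1 := ⟨2 * s ^ 2, by rw [hs, Nat.add_sub_cancel]; ring⟩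
  obtain ⟨χ, hχ⟩ := MulChar.exists_mulChar_orderOf F ((dvd_mul_left 4 2).trans eight_dvd)
    isPrimitiveRoot_gaussianInt_sqrtd
  obtain ⟨b, hb⟩ := exists_units_pow_eq_neg_one eight_dvd
  set φ : MulChar F ℂ := χ.ringHomComp GaussianInt.toComplex with hφ_def
  have hφ : orderOf φ = 4 := hχ ▸ orderOf_injective (MulChar.ringHomCompHom GaussianInt.toComplex)
    (MulChar.injective_ringHomComp gaussianInt_toComplex_injective) χ
  have φ_neg_one : φ (-1) = 1 := (mulChar_apply_eq_one_iff φ (-1)).mpr ⟨b, hφ ▸ hb⟩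
  have jacobi : jacobiSum φ (φ ^ 2) + jacobiSum φ⁻¹ (φ ^ 2)⁻¹ = -2 := by
    rw [← conj_jacobiSum, Complex.add_conj, hφ_def, MulChar.ringHomComp_pow, jacobiSum_ringHomComp,
      ← GaussianInt.intCast_re, re_jacobiSum_sq_eq_neg_one hχ hF hs]
    norm_num
  have product := sixteen_mul_gaussianPeriod_mul hφ φ_neg_one hψ
    (Nat.cast_ne_zero.mpr Fintype.card_ne_zero) (mulChar_apply_sq_eq_neg_one hφ hd)
  rw [add_assoc, jacobi, hs] at product
  push_cast at product
  linear_combination product / 16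

end GaussianPeriod

theorem not_isSquare_three : ¬IsSquare (3 : ZMod 65537) := by
  have : Fact (Nat.Prime 65537) := ⟨by norm_num⟩
  have legendre : legendreSym 65537 3 = -1 := by norm_num
  simpa using (legendreSym.eq_neg_one_iff 65537).mp legendre

theorem stmt12_general {p s : ℕ} [Fact p.Prime] (hp : p = (4 * s) ^ 2 + 1) {ζ : ℂ}
    (hζ : IsPrimitiveRoot ζ p) {d : ZMod p} (hd : ¬IsSquare d) :
    (∑ a ∈ image (fun x : (ZMod p)ˣ ↦ (x : ZMod p) ^ 4) univ, ζ ^ a.val) *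
      (∑ a ∈ image (fun x : (ZMod p)ˣ ↦ d ^ 2 * (x : ZMod p) ^ 4) univ, ζ ^ a.val) =
        -(s : ℂ) ^ 2 := by
  have hψ : AddChar.zmodChar p hζ.pow_eq_one ≠ 1 := by
    simpa using AddChar.zmodChar_primitive_of_primitive_root p hζ one_ne_zero
  have card_eq := ZMod.card p
  simpa [gaussianPeriod, AddChar.zmodChar_apply] using gaussianPeriod_one_mul_gaussianPeriod_sq
    (card_eq.symm ▸ Fact.out) (card_eq.trans hp) hψ hd

/-- Let `ζ = exp (2 π i / 65537)`, let `H = {x ^ 4 : x ∈ (ZMod 65537)ˣ}` be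
the subgroup of fourth powers mod `65537`, `η₀ = ∑_{a ∈ H} ζ ^ a` and `η₂ = ∑_{a ∈ 9 H} ζ ^ a`.
Then `η₀ * η₂ = -4096 = -(65537 - 1) / 16`. -/
theorem stmt12 :
    (∑ a ∈ Finset.image (fun x : (ZMod 65537)ˣ => (x : ZMod 65537) ^ 4) Finset.univ,
        Complex.exp (2 * Real.pi * Complex.I / 65537) ^ a.val) *
    (∑ a ∈ Finset.image (fun x : (ZMod 65537)ˣ => 9 * (x : ZMod 65537) ^ 4) Finset.univ,
        Complex.exp (2 * Real.pi * Complex.I / 65537) ^ a.val) = -4096 := by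
  have : Fact (Nat.Prime 65537) := ⟨by norm_num⟩
  convert stmt12_general (p := 65537) (s := 64) (by norm_num)
    (by simpa using Complex.isPrimitiveRoot_exp 65537 (by norm_num)) not_isSquare_three using 1
  all_goals norm_num
end

section
/- Let n = 2^(2^ν) + 1 be prime with ν ≥ 1. Then there exists a tower of fields ℚ = K₀ ⊆ K₁ ⊆ ... ⊆ K_{2^ν − 1} of subfields of ℝ such that each extension K_{i+1}/K_i has degree 2 and 2·cos(2π/n) ∈ K_{2^ν − 1}. In particular, for every Fermat prime n the regular n-gon is constructible with compass and straightedge. -/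
/-!
Let `ζ` be a primitive `n`-th root of unity, so that `2 cos (2π / n) = ζ + ζ⁻¹` for a suitable
choice of `ζ`. Since `ζ` is a non-real root of `X² - (ζ + ζ⁻¹) X + 1`, the field `ℚ(ζ + ζ⁻¹)` has
index `2` in `ℚ(ζ)`, hence degree `φ(n) / 2` over `ℚ`, and it is Galois because `ℚ(ζ)` is abelian.
When `φ(n)` is a power of `2` its Galois group is a `2`-group; by Sylow every subgroup of a
`2`-group other than the whole group has index `2` in a larger one, and a chain of such subgroups
from `1` up to the whole group has the required tower as its fixed fields.
-/

open IntermediateField Module Polynomial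

section Tower

variable {F E : Type*} [Field F] [Field E] [Algebra F E]

/-- A tower of `m` successive extensions of degree `d` that starts at the base field. The fields of
the tower are `K 0, …, K m`; nothing is asked of `K i` for `i > m`. -/
structure IsTowerOfDegree (d m : ℕ) (K : ℕ → IntermediateField F E) : Prop where
  zero : K 0 = ⊥
  le_succ : ∀ i < m, K i ≤ K (i + 1)
  relfinrank_succ : ∀ i < m, relfinrank (K i) (K (i + 1)) = d

namespace IsTowerOfDegree

variable {d m : ℕ} {K : ℕ → IntermediateField F E}

theorem update_succ (hK : IsTowerOfDegree d m K) {A : IntermediateField F E} (hA : K m ≤ A)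
    (hd : relfinrank (K m) A = d) : IsTowerOfDegree d (m + 1) (Function.update K (m + 1) A) where
  zero := by simpa using hK.zero
  le_succ i hi := by
    obtain hi | rfl := Nat.lt_succ_iff_lt_or_eq.mp hi
    · simpa [hi.ne, (Nat.lt_succ_of_lt hi).ne] using hK.le_succ i hi
    · simpa using hA
  relfinrank_succ i hi := by
    obtain hi | rfl := Nat.lt_succ_iff_lt_or_eq.mp hi
    · simpa [hi.ne, (Nat.lt_succ_of_lt hi).ne] using hK.relfinrank_succ i hi
    · simpa using hd

theorem map (hK : IsTowerOfDegree d m K) {L : Type*} [Field L] [Algebra F L] (f : E →ₐ[F] L) :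
    IsTowerOfDegree d m fun i ↦ (K i).map f where
  zero := by rw [hK.zero, IntermediateField.map_bot]
  le_succ i hi := map_mono f (hK.le_succ i hi)
  relfinrank_succ i hi := by rw [relfinrank_map_map, hK.relfinrank_succ i hi]

end IsTowerOfDegree

theorem exists_le_relfinrank_eq_prime [FiniteDimensional F E] [IsGalois F E] {p c : ℕ}
    [Fact p.Prime] {A : IntermediateField F E} (hA : finrank A E = p ^ c)
    (hE : p ^ (c + 1) ∣ finrank F E) : ∃ B ≤ A, relfinrank B A = p := by
  rw [← IsGalois.card_fixingSubgroup_eq_finrank] at hA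
  rw [← IsGalois.card_aut_eq_finrank] at hE
  obtain ⟨H, hH, hAH⟩ := Sylow.exists_subgroup_card_pow_succ hE hA
  have hHA : fixedField H ≤ A :=
    (fixedField_le hAH).trans_eq (IsGalois.fixedField_fixingSubgroup A)
  refine ⟨fixedField H, hHA, ?_⟩
  have hmul := relfinrank_mul_finrank_top hHA
  rw [finrank_fixedField_eq_card, hH, ← IsGalois.card_fixingSubgroup_eq_finrank, hA,
    pow_succ'] at hmul
  exact Nat.eq_of_mul_eq_mul_right (pow_pos (Fact.out : p.Prime).pos c) hmul

theorem exists_isTowerOfDegree_of_finrank_eq_pow [IsGalois F E] {p : ℕ} [Fact p.Prime]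
    {m c : ℕ} {A : IntermediateField F E} (hF : finrank F A = p ^ m)
    (hE : finrank A E = p ^ c) :
    ∃ K : ℕ → IntermediateField F E, IsTowerOfDegree p m K ∧ K m = A := by
  have hp : p.Prime := Fact.out
  have : FiniteDimensional F E := finite_of_finrank_pos <| by
    rw [← finrank_mul_finrank F A E, hF, hE, ← pow_add]
    exact pow_pos hp.pos _
  induction m generalizing A c with
  | zero =>
    exact ⟨fun _ ↦ ⊥, ⟨rfl, by simp, by simp⟩, (finrank_eq_one_iff.mp (by simpa using hF)).symm⟩
  | succ m ih =>
    have hdvd : p ^ (c + 1) ∣ finrank F E :=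
      ⟨p ^ m, by rw [← finrank_mul_finrank F A E, hF, hE]; ring⟩
    obtain ⟨B, hBA, hd⟩ := exists_le_relfinrank_eq_prime hE hdvd
    have hFB : finrank F B = p ^ m := by
      have hmul := finrank_bot_mul_relfinrank hBA
      rw [hd, hF, pow_succ] at hmul
      exact Nat.eq_of_mul_eq_mul_right hp.pos hmul
    have hBE : finrank B E = p ^ (c + 1) := by
      rw [← relfinrank_mul_finrank_top hBA, hd, hE, pow_succ']
    obtain ⟨K, hK, rfl⟩ := ih hFB hBE
    exact ⟨_, hK.update_succ hBA hd, Function.update_self ..⟩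

theorem exists_isTowerOfDegree_of_isGalois {p : ℕ} [Fact p.Prime] {m : ℕ}
    {A : IntermediateField F E} [IsGalois F A] (hA : finrank F A = p ^ m) :
    ∃ K : ℕ → IntermediateField F E, IsTowerOfDegree p m K ∧ K m = A := by
  have htop : finrank F (⊤ : IntermediateField F A) = p ^ m := finrank_top'.trans hA
  obtain ⟨K, hK, hKm⟩ := exists_isTowerOfDegree_of_finrank_eq_pow (c := 0) htop (by simp)
  refine ⟨_, hK.map A.val, ?_⟩
  simp only [hKm, ← AlgHom.fieldRange_eq_map, fieldRange_val]

end Tower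

theorem le_two_of_isPrimitiveRoot {R : Type*} [CommRing R] [LinearOrder R]
    [IsStrictOrderedRing R] {x : R} {n : ℕ} (hx : IsPrimitiveRoot x n) : n ≤ 2 :=
  hx.eq_orderOf ▸ LinearOrderedRing.orderOf_le_two

theorem two_lt_of_one_lt_totient {n : ℕ} (hn : 1 < n.totient) : 2 < n := by
  by_contra! hle
  interval_cases n <;> simp at hn

section AddInv

variable {F E : Type*} [Field F] [Field E] [Algebra F E] {ζ : E}

theorem adjoin_add_inv_le_adjoin : F⟮ζ + ζ⁻¹⟯ ≤ F⟮ζ⟯ :=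
  adjoin_simple_le_iff.mpr
    (add_mem (mem_adjoin_simple_self F ζ) (inv_mem (mem_adjoin_simple_self F ζ)))

theorem natDegree_minpoly_eq_two_of_add_inv_mem {K : IntermediateField F E} (hζ : ζ ∉ K)
    (hadd : ζ + ζ⁻¹ ∈ K) : (minpoly K ζ).natDegree = 2 := by
  have hζ0 : ζ ≠ 0 := fun h ↦ hζ (h ▸ zero_mem K)
  let q : K[X] := C 1 * X ^ 2 + C (-⟨ζ + ζ⁻¹, hadd⟩) * X + C 1
  have hq : q.natDegree = 2 := natDegree_quadratic one_ne_zero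
  have hq0 : q ≠ 0 := ne_zero_of_natDegree_gt (hq ▸ two_pos)
  have hroot : aeval ζ q = 0 := by
    have hζinv : ζ⁻¹ * ζ = 1 := inv_mul_cancel₀ hζ0
    simp only [q, map_one, one_mul, map_neg, neg_mul, map_add, map_pow, aeval_X, map_mul,
      aeval_C, IntermediateField.algebraMap_apply]
    linear_combination -hζinv
  have hint : IsIntegral K ζ := isAlgebraic_iff_isIntegral.mp ⟨q, hq0, hroot⟩
  refine le_antisymm (hq ▸ natDegree_le_of_dvd (minpoly.dvd K ζ hroot) hq0)
    ((minpoly.two_le_natDegree_iff hint).mpr ?_)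
  rintro ⟨x, rfl⟩
  exact hζ x.2

theorem relfinrank_adjoin_add_inv_adjoin (hζ : ζ ∉ F⟮ζ + ζ⁻¹⟯) :
    relfinrank F⟮ζ + ζ⁻¹⟯ F⟮ζ⟯ = 2 := by
  have hdeg := natDegree_minpoly_eq_two_of_add_inv_mem hζ (mem_adjoin_simple_self F _)
  have hint : IsIntegral F⟮ζ + ζ⁻¹⟯ ζ :=
    minpoly.ne_zero_iff.mp (ne_zero_of_natDegree_gt (hdeg ▸ two_pos))
  have hext : extendScalars (adjoin_add_inv_le_adjoin (F := F) (ζ := ζ)) = F⟮ζ + ζ⁻¹⟯⟮ζ⟯ := by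
    apply restrictScalars_injective F
    rw [extendScalars_restrictScalars, restrictScalars_adjoin_eq_sup,
      sup_eq_right.mpr adjoin_add_inv_le_adjoin]
  rw [relfinrank_eq_finrank_of_le adjoin_add_inv_le_adjoin, hext, adjoin.finrank hint, hdeg]

theorem isCyclotomicExtension_adjoin_simple {n : ℕ} [NeZero n] (hζ : IsPrimitiveRoot ζ n) :
    IsCyclotomicExtension {n} F F⟮ζ⟯ :=
  (IntermediateField.isCyclotomicExtension_singleton_iff_eq_adjoin n F E F⟮ζ⟯ hζ).mpr rfl

theorem isAbelianGalois_adjoin_add_inv {n : ℕ} [NeZero n] (hζ : IsPrimitiveRoot ζ n) :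
    IsAbelianGalois F F⟮ζ + ζ⁻¹⟯ := by
  have := isCyclotomicExtension_adjoin_simple (F := F) hζ
  have := IsCyclotomicExtension.isAbelianGalois {n} F F⟮ζ⟯
  exact .of_algHom (inclusion adjoin_add_inv_le_adjoin)

theorem finrank_adjoin_add_inv_mul_two {n : ℕ} [NeZero n] (hζ : IsPrimitiveRoot ζ n)
    (hirr : Irreducible (cyclotomic n F)) (hmem : ζ ∉ F⟮ζ + ζ⁻¹⟯) :
    finrank F F⟮ζ + ζ⁻¹⟯ * 2 = n.totient := by
  have := isCyclotomicExtension_adjoin_simple (F := F) hζ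
  rw [← IsCyclotomicExtension.finrank F⟮ζ⟯ hirr, ← relfinrank_adjoin_add_inv_adjoin hmem,
    finrank_bot_mul_relfinrank adjoin_add_inv_le_adjoin]

variable {R : Type*} [Field R] [Algebra F R]

theorem map_adjoin_simple_eq_adjoin_add_inv {f : R →ₐ[F] E} {c : R} (hc : f c = ζ + ζ⁻¹) :
    F⟮c⟯.map f = F⟮ζ + ζ⁻¹⟯ := by
  rw [adjoin_map, Set.image_singleton, hc]

theorem isAbelianGalois_adjoin_of_map_eq_add_inv {n : ℕ} [NeZero n] (hζ : IsPrimitiveRoot ζ n)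
    {f : R →ₐ[F] E} {c : R} (hc : f c = ζ + ζ⁻¹) : IsAbelianGalois F F⟮c⟯ := by
  have hab := isAbelianGalois_adjoin_add_inv (F := F) hζ
  rw [← map_adjoin_simple_eq_adjoin_add_inv hc] at hab
  exact .of_algHom (F⟮c⟯.equivMap f).toAlgHom

theorem finrank_adjoin_mul_two_of_map_eq_add_inv [LinearOrder R] [IsStrictOrderedRing R] {n : ℕ}
    (hn : 2 < n) (hζ : IsPrimitiveRoot ζ n) (hirr : Irreducible (cyclotomic n F)) {f : R →ₐ[F] E}
    {c : R} (hc : f c = ζ + ζ⁻¹) : finrank F F⟮c⟯ * 2 = n.totient := by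
  have : NeZero n := ⟨by lia⟩
  have hmap := map_adjoin_simple_eq_adjoin_add_inv hc
  have hmem : ζ ∉ F⟮ζ + ζ⁻¹⟯ := by
    rw [← hmap]
    rintro ⟨r, -, rfl⟩
    exact hn.not_ge (le_two_of_isPrimitiveRoot (hζ.of_map_of_injective f.injective))
  rw [← finrank_adjoin_add_inv_mul_two hζ hirr hmem, ← hmap,
    (F⟮c⟯.equivMap f).toLinearEquiv.finrank_eq]

theorem exists_isTowerOfDegree_two_of_map_eq_add_inv [LinearOrder R] [IsStrictOrderedRing R]
    {n m : ℕ} (hn : n.totient = 2 ^ (m + 1)) (hζ : IsPrimitiveRoot ζ n)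
    (hirr : Irreducible (cyclotomic n F)) {f : R →ₐ[F] E} {c : R} (hc : f c = ζ + ζ⁻¹) :
    ∃ K : ℕ → IntermediateField F R, IsTowerOfDegree 2 m K ∧ K m = F⟮c⟯ := by
  have hn2 : 2 < n := two_lt_of_one_lt_totient (hn ▸ Nat.one_lt_two_pow m.succ_ne_zero)
  have : NeZero n := ⟨by lia⟩
  have := isAbelianGalois_adjoin_of_map_eq_add_inv hζ hc
  have hdeg := finrank_adjoin_mul_two_of_map_eq_add_inv hn2 hζ hirr hc
  rw [hn, pow_succ] at hdeg
  exact exists_isTowerOfDegree_of_isGalois (Nat.eq_of_mul_eq_mul_right two_pos hdeg)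

end AddInv

theorem ofReal_two_mul_cos_eq_exp_add_inv (n : ℕ) :
    ((2 * Real.cos (2 * Real.pi / n) : ℝ) : ℂ) =
      Complex.exp (2 * Real.pi * Complex.I / n) +
        (Complex.exp (2 * Real.pi * Complex.I / n))⁻¹ := by
  push_cast
  rw [Complex.two_cos, ← Complex.exp_neg]
  congr 2 <;> ring

theorem stmt19_general {n m : ℕ} (hn : n.totient = 2 ^ (m + 1)) :
    ∃ K : ℕ → IntermediateField ℚ ℝ,
      IsTowerOfDegree 2 m K ∧ K m = ℚ⟮2 * Real.cos (2 * Real.pi / n)⟯ :=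
  have hpos : 0 < n := Nat.totient_pos.mp (hn ▸ Nat.two_pow_pos (m + 1))
  exists_isTowerOfDegree_two_of_map_eq_add_inv hn (Complex.isPrimitiveRoot_exp n hpos.ne')
    (cyclotomic.irreducible_rat hpos) (f := Complex.ofRealAm.restrictScalars ℚ)
    (ofReal_two_mul_cos_eq_exp_add_inv n)

/-- For every Fermat prime `n = 2 ^ 2 ^ ν + 1` (`ν ≥ 1`) there exists a
tower of subfields `ℚ = K₀ ⊆ K₁ ⊆ … ⊆ K_{2^ν - 1}` of `ℝ` such that each extension
`K_{i+1} / K_i` has degree `2` and `2 cos (2π / n) ∈ K_{2^ν - 1}`. In particular, the regular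
`n`-gon is constructible with compass and straightedge. -/
theorem stmt19 (ν n : ℕ) (hν : 1 ≤ ν) (hn : n = 2 ^ (2 ^ ν) + 1) (hp : n.Prime) :
    ∃ K : ℕ → IntermediateField ℚ ℝ,
      K 0 = ⊥ ∧
      (∀ i < 2 ^ ν - 1, K i ≤ K (i + 1)) ∧
      (∀ i < 2 ^ ν - 1, IntermediateField.relfinrank (K i) (K (i + 1)) = 2) ∧
      2 * Real.cos (2 * Real.pi / n) ∈ K (2 ^ ν - 1) := by
  have htot : n.totient = 2 ^ (2 ^ ν - 1 + 1) := by
    rw [Nat.totient_prime hp, hn, Nat.add_sub_cancel, Nat.sub_add_cancel Nat.one_le_two_pow]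
  obtain ⟨K, hK, hKm⟩ := stmt19_general htot
  exact ⟨K, hK.zero, hK.le_succ, hK.relfinrank_succ, hKm ▸ mem_adjoin_simple_self ℚ _⟩
end
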